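/- arXiv:2302.09773 — 2 statements merged into one kernel-verified Lean document; each statement's English description precedes it below -/
import Mathlib

section
/- Assume n is odd. For every Hopf algebra automorphism ψ of A = A_{Nn}^{μλ} there exist integers s, t with 1 ≤ s ≤ N and 1 ≤ t ≤ n − 1 such that ψ(C_{N1}) = C_{st}, where C_{N1} is the k-linear span of {x11, x12, x21, x22}. -/
/-!
A coalgebra which is the direct sum of subcoalgebras `M_α` carries the projections `P_α`, which are
endomorphisms of bicomodules. By a Schur-type argument `P_α` acts as a scalar on linearly
independent elements `y_{ij}` with `Δ y_{ij} = ∑_l y_{il} ⊗ y_{lj}`, so that all the `y_{ij}` lie in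
one of the `M_α`.

The Suzuki algebra is the direct sum of the subcoalgebras `C_{st}` with `1 ≤ s ≤ N`, `0 ≤ t ≤ n`,
where `C_{st}` is spanned by the `x_{ij}^{2s} χ_{ij}^t`. It has dimension `4` for `1 ≤ t ≤ n - 1`,
and dimension at most `2` for `t = 0` and `t = n`. An injective coalgebra endomorphism maps each
four-dimensional `C_{st}` into one of the blocks, hence onto a four-dimensional one.
-/

open scoped TensorProduct

noncomputable section

/-- The alternating product `x i j * x (i+1) (j+1) * x i j * ⋯` with `m` factors,
    i.e. `χ_{ij}^m` for the Suzuki presentation (indices taken in `Fin 2`). -/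
def chi {A : Type*} [Ring A] (x : Fin 2 → Fin 2 → A) : Fin 2 → Fin 2 → ℕ → A
  | _, _, 0 => 1
  | i, j, (m + 1) => x i j * chi x (i + 1) (j + 1) (m)

/-- A presentation of the Suzuki Hopf algebra `A_{Nn}^{μλ}` over `k`:
`x 0 0 = x₁₁`, `x 0 1 = x₁₂`, `x 1 0 = x₂₁`, `x 1 1 = x₂₂`. -/
structure Suzuki (k A : Type*) [Field k] [CharZero k] [IsAlgClosed k]
    [Ring A] [HopfAlgebra k A] where
  N : ℕ
  n : ℕ
  hN : 1 ≤ N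
  hn : 2 ≤ n
  μ : k
  lam : k
  hμ : μ = 1 ∨ μ = -1
  hlam : lam = 1 ∨ lam = -1
  x : Fin 2 → Fin 2 → A
  gen : Algebra.adjoin k (Set.range fun p : Fin 2 × Fin 2 => x p.1 p.2) = ⊤
  rel_sq1 : x 0 0 ^ 2 = x 1 1 ^ 2
  rel_sq2 : x 0 1 ^ 2 = x 1 0 ^ 2
  rel_chi1 : chi x 1 0 n = lam • chi x 0 1 n
  rel_chi2 : chi x 0 0 n = chi x 1 1 n
  rel_mu : x 0 0 ^ (2 * N) + μ • x 0 1 ^ (2 * N) = 1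
  rel_odd : ∀ i j i' j' : Fin 2, Odd ((i : ℕ) + j + i' + j') → x i j * x i' j' = 0
  comul_chi : ∀ (i j : Fin 2) (m : ℕ), 1 ≤ m →
    Coalgebra.comul (R := k) (chi x i j m)
      = chi x i 0 m ⊗ₜ[k] chi x 0 j m + chi x i 1 m ⊗ₜ[k] chi x 1 j m
  counit_x : ∀ i j : Fin 2,
    Coalgebra.counit (R := k) (x i j) = if i = j then (1 : k) else 0
  antipode_x : ∀ i j : Fin 2,
    HopfAlgebra.antipode (R := k) (x i j) = x j i ^ (4 * N - 1)
  basis_indep : LinearIndependent k (fun p : Fin 2 × Fin (2 * N) × Fin n =>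
      if p.1 = 0 then x 0 0 ^ ((p.2.1 : ℕ) + 1) * chi x 1 1 (p.2.2 : ℕ)
      else x 0 1 ^ ((p.2.1 : ℕ) + 1) * chi x 1 0 (p.2.2 : ℕ))
  basis_span : Submodule.span k (Set.range fun p : Fin 2 × Fin (2 * N) × Fin n =>
      if p.1 = 0 then x 0 0 ^ ((p.2.1 : ℕ) + 1) * chi x 1 1 (p.2.2 : ℕ)
      else x 0 1 ^ ((p.2.1 : ℕ) + 1) * chi x 1 0 (p.2.2 : ℕ)) = ⊤

/-- A Hopf algebra automorphism of `A`: a bijective `k`-linear map `A → A` that is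
both an algebra homomorphism and a coalgebra homomorphism. -/
def IsHopfAut (k : Type*) {A : Type*} [Field k] [Ring A] [HopfAlgebra k A]
    (ψ : A ≃ₗ[k] A) : Prop :=
  (∀ a b : A, ψ (a * b) = ψ a * ψ b) ∧ ψ 1 = 1 ∧
  (∀ a : A, Coalgebra.comul (R := k) (ψ a)
      = TensorProduct.map ψ.toLinearMap ψ.toLinearMap (Coalgebra.comul (R := k) a)) ∧
  (∀ a : A, Coalgebra.counit (R := k) (ψ a) = Coalgebra.counit (R := k) a)

/-! ### Comatrices and direct sums of subcoalgebras -/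

lemma range_uncurry_fin_two {α : Type*} (f : Fin 2 → Fin 2 → α) :
    (Set.range fun p : Fin 2 × Fin 2 => f p.1 p.2) = {f 0 0, f 0 1, f 1 0, f 1 1} := by
  ext a
  simp [Prod.exists, Fin.exists_fin_two, eq_comm, or_assoc]

lemma pow_mul_eq_zero_of_mul_eq_zero {M : Type*} [MonoidWithZero M] {a b : M} (h : a * b = 0)
    {m : ℕ} (hm : m ≠ 0) : a ^ m * b = 0 := by
  rw [← pow_sub_one_mul hm, mul_assoc, h, mul_zero]

lemma iSupIndep_span_image_fiber {R M β γ : Type*} [Ring R] [AddCommGroup M] [Module R M]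
    {v : β → M} (hv : LinearIndependent R v) (d : β → γ) :
    iSupIndep fun α => Submodule.span R (v '' (d ⁻¹' {α})) := fun α => by
  simp only [← Submodule.span_iUnion, ← Set.image_iUnion]
  refine hv.disjoint_span_image (Set.disjoint_left.2 fun p hp hp' => ?_)
  obtain ⟨β, hβ, hpβ⟩ := Set.mem_iUnion₂.1 hp'
  exact hβ (hpβ.symm.trans hp)

section SummandProj

variable {R C γ : Type*} [Semiring R] [AddCommMonoid C] [Module R C] [DecidableEq γ]
  (M : γ → Submodule R C) [DirectSum.Decomposition M]

/-- The projection of `C = ⨁ α, M α` onto the summand `M α`, as an endomorphism of `C`. -/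
def summandProj (α : γ) : C →ₗ[R] C :=
  (M α).subtype ∘ₗ DirectSum.component R γ (fun β => M β) α ∘ₗ
    (DirectSum.decomposeLinearEquiv M).toLinearMap

lemma summandProj_apply (α : γ) (a : C) : summandProj M α a = DirectSum.decompose M a α := rfl

lemma summandProj_of_mem (α : γ) {β : γ} {a : C} (ha : a ∈ M β) :
    summandProj M α a = (if β = α then 1 else 0 : R) • a := by
  rw [summandProj_apply]
  split_ifs with h
  · rw [one_smul, ← h, DirectSum.decompose_of_mem_same M ha]
  · rw [zero_smul, DirectSum.decompose_of_mem_ne M ha h]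

lemma exists_summandProj_ne_zero {a : C} (ha : a ≠ 0) : ∃ α, summandProj M α a ≠ 0 := by
  contrapose! ha
  refine (DirectSum.decompose M).injective (DFinsupp.ext fun α => Subtype.ext ?_)
  simpa [summandProj_apply] using ha α

end SummandProj

section Coalgebra

variable {R C D ι γ : Type*} [CommSemiring R] [AddCommMonoid C] [Module R C] [Coalgebra R C]
  [AddCommMonoid D] [Module R D] [Coalgebra R D]

/-- A submodule `M` is a subcoalgebra if `Δ M ⊆ M ⊗ M`, where `M ⊗ M` stands for its image in
`C ⊗ C`. -/
def IsSubcoalgebra (M : Submodule R C) : Prop :=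
  ∀ a ∈ M, Coalgebra.comul (R := R) a ∈ Submodule.map₂ (TensorProduct.mk R C C) M M

/-- An endomorphism of `C` as a bicomodule over itself: `(P ⊗ id) Δ = Δ P = (id ⊗ P) Δ`. -/
structure IsBicomoduleEnd (P : C →ₗ[R] C) : Prop where
  rTensor_comul : ∀ a, P.rTensor C (Coalgebra.comul a) = Coalgebra.comul (R := R) (P a)
  lTensor_comul : ∀ a, P.lTensor C (Coalgebra.comul a) = Coalgebra.comul (R := R) (P a)

section

variable {M : Submodule R C} {P : C →ₗ[R] C} {c : R} {a : C}

lemma IsSubcoalgebra.rTensor_comul (hM : IsSubcoalgebra M) (hP : ∀ a ∈ M, P a = c • a)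
    (ha : a ∈ M) : P.rTensor C (Coalgebra.comul a) = Coalgebra.comul (R := R) (P a) := by
  have h : Submodule.map₂ (TensorProduct.mk R C C) M M ≤
      LinearMap.eqLocus (P.rTensor C) (LinearMap.lsmul R _ c) :=
    Submodule.map₂_le.2 fun u hu v _ => by simp [hP u hu, TensorProduct.smul_tmul']
  rw [hP a ha, map_smul]
  exact h (hM a ha)

lemma IsSubcoalgebra.lTensor_comul (hM : IsSubcoalgebra M) (hP : ∀ a ∈ M, P a = c • a)
    (ha : a ∈ M) : P.lTensor C (Coalgebra.comul a) = Coalgebra.comul (R := R) (P a) := by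
  have h : Submodule.map₂ (TensorProduct.mk R C C) M M ≤
      LinearMap.eqLocus (P.lTensor C) (LinearMap.lsmul R _ c) :=
    Submodule.map₂_le.2 fun u _ v hv => by simp [hP v hv]
  rw [hP a ha, map_smul]
  exact h (hM a ha)

end

theorem isBicomoduleEnd_summandProj [DecidableEq γ] {M : γ → Submodule R C}
    [DirectSum.Decomposition M] (hM : ∀ α, IsSubcoalgebra (M α)) (α : γ) :
    IsBicomoduleEnd (summandProj M α) := by
  refine ⟨fun a => ?_, fun a => ?_⟩
  · induction a using DirectSum.Decomposition.inductionOn M with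
    | zero => simp only [map_zero]
    | homogeneous a => exact (hM _).rTensor_comul (fun _ => summandProj_of_mem M α) a.2
    | add a b ha hb => simp only [map_add, ha, hb]
  · induction a using DirectSum.Decomposition.inductionOn M with
    | zero => simp only [map_zero]
    | homogeneous a => exact (hM _).lTensor_comul (fun _ => summandProj_of_mem M α) a.2
    | add a b ha hb => simp only [map_add, ha, hb]

variable [Fintype ι]

/-- A square array of elements comultiplying like the coefficients of a comodule with a basis
indexed by `ι`. The condition `ε (y i j) = δ_{ij}` is left out: it holds automatically when the
`y i j` are linearly independent. -/
def IsComatrix (R : Type*) {C ι : Type*} [Fintype ι] [CommSemiring R] [AddCommMonoid C]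
    [Module R C] [Coalgebra R C] (y : ι → ι → C) : Prop :=
  ∀ i j, Coalgebra.comul (R := R) (y i j) = ∑ l, y i l ⊗ₜ[R] y l j

variable {y : ι → ι → C}

lemma IsComatrix.map (hy : IsComatrix R y) (ψ : C →ₗc[R] D) :
    IsComatrix R fun i j => ψ (y i j) := fun i j => by
  rw [← CoalgHomClass.map_comp_comul_apply, hy, map_sum]
  rfl

lemma IsComatrix.isSubcoalgebra_span (hy : IsComatrix R y) :
    IsSubcoalgebra (Submodule.span R (Set.range fun p : ι × ι => y p.1 p.2)) := by
  suffices h : Submodule.span R (Set.range fun p : ι × ι => y p.1 p.2) ≤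
      Submodule.comap Coalgebra.comul (Submodule.map₂ (TensorProduct.mk R C C) _ _) from h
  rw [Submodule.span_le]
  rintro _ ⟨⟨i, j⟩, rfl⟩
  rw [SetLike.mem_coe, Submodule.mem_comap, hy]
  exact Submodule.sum_mem _ fun l _ => Submodule.apply_mem_map₂ _
    (Submodule.subset_span ⟨(i, l), rfl⟩) (Submodule.subset_span ⟨(l, j), rfl⟩)

variable {P : C →ₗ[R] C}

lemma IsBicomoduleEnd.apply_eq_sum_left (hP : IsBicomoduleEnd P) (hy : IsComatrix R y) (i j : ι) :
    P (y i j) = ∑ l, Coalgebra.counit (R := R) (P (y i l)) • y l j := by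
  have h := Coalgebra.rTensor_counit_comul (R := R) (P (y i j))
  rw [← hP.rTensor_comul, hy] at h
  simpa using congrArg (TensorProduct.lid R C) h.symm

lemma IsBicomoduleEnd.apply_eq_sum_right (hP : IsBicomoduleEnd P) (hy : IsComatrix R y)
    (i j : ι) : P (y i j) = ∑ l, Coalgebra.counit (R := R) (P (y l j)) • y i l := by
  have h := Coalgebra.lTensor_counit_comul (R := R) (P (y i j))
  rw [← hP.lTensor_comul, hy] at h
  simpa using congrArg (TensorProduct.rid R C) h.symm

theorem IsBicomoduleEnd.exists_apply_eq_smul (hP : IsBicomoduleEnd P) (hy : IsComatrix R y)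
    (hli : LinearIndependent R fun p : ι × ι => y p.1 p.2) :
    ∃ c : R, ∀ i j, P (y i j) = c • y i j := by
  classical
  rcases isEmpty_or_nonempty ι with _ | ⟨⟨j⟩⟩
  · exact ⟨0, isEmptyElim⟩
  let e : ι → ι → R := fun i l => Coalgebra.counit (P (y i l))
  obtain ⟨c, he⟩ : ∃ c, ∀ i a, e i a = if a = i then c else 0 := by
    refine ⟨e j j, fun i a => ?_⟩
    have h : ∑ p : ι × ι, (if p.2 = j then e i p.1 else 0) • y p.1 p.2
        = ∑ p : ι × ι, (if p.1 = i then e p.2 j else 0) • y p.1 p.2 := by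
      rw [Fintype.sum_prod_type, Fintype.sum_prod_type_right]
      simpa [ite_smul] using (hP.apply_eq_sum_left hy i j).symm.trans (hP.apply_eq_sum_right hy i j)
    simpa using Fintype.linearIndependent_iffₛ.1 hli _ _ h (a, j)
  refine ⟨c, fun i l => ?_⟩
  calc P (y i l) = ∑ a, e i a • y a l := hP.apply_eq_sum_left hy i l
    _ = c • y i l := by simp [he, ite_smul]

end Coalgebra

theorem IsComatrix.exists_forall_mem {K C ι γ : Type*} [Field K] [AddCommGroup C] [Module K C]
    [Coalgebra K C] [Fintype ι] [Nonempty ι] [DecidableEq γ] {M : γ → Submodule K C}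
    [DirectSum.Decomposition M] (hM : ∀ α, IsSubcoalgebra (M α)) {y : ι → ι → C}
    (hy : IsComatrix K y) (hli : LinearIndependent K fun p : ι × ι => y p.1 p.2) :
    ∃ α, ∀ i j, y i j ∈ M α := by
  obtain ⟨l⟩ := ‹Nonempty ι›
  obtain ⟨α, hα⟩ := exists_summandProj_ne_zero M (hli.ne_zero (l, l))
  obtain ⟨c, hc⟩ := (isBicomoduleEnd_summandProj hM α).exists_apply_eq_smul hy hli
  have hc0 : c ≠ 0 := by
    rintro rfl
    exact hα (by rw [hc, zero_smul])
  exact ⟨α, fun i j => ((M α).smul_mem_iff hc0).1 (hc i j ▸ (DirectSum.decompose M (y i j) α).2)⟩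

section Bialgebra

variable {R B ι : Type*} [CommSemiring R] [Semiring B] [Bialgebra R B] [Fintype ι]
  {y z : ι → ι → B}

lemma IsComatrix.mul (hy : IsComatrix R y) (hz : IsComatrix R z)
    (h : ∀ i l m, l ≠ m → y i l * z i m = 0) : IsComatrix R fun i j => y i j * z i j := by
  intro i j
  rw [Bialgebra.comul_mul, hy, hz, Finset.sum_mul_sum]
  refine Finset.sum_congr rfl fun l _ => ?_
  rw [Finset.sum_eq_single l (fun m _ hm => ?_) (by simp), Algebra.TensorProduct.tmul_mul_tmul]
  rw [Algebra.TensorProduct.tmul_mul_tmul, h i l m hm.symm, TensorProduct.zero_tmul]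

lemma IsComatrix.pow (hy : IsComatrix R y) (h : ∀ i l m, l ≠ m → y i l * y i m = 0)
    {m : ℕ} (hm : 1 ≤ m) : IsComatrix R fun i j => y i j ^ m := by
  induction m, hm using Nat.le_induction with
  | base => simpa only [pow_one] using hy
  | succ m hm ih =>
    simp only [pow_succ]
    exact ih.mul hy fun i l l' hl =>
      pow_mul_eq_zero_of_mul_eq_zero (h i l l' hl) (Nat.one_le_iff_ne_zero.1 hm)

end Bialgebra

namespace Suzuki

variable {k A : Type*} [Field k] [CharZero k] [IsAlgClosed k] [Ring A] [HopfAlgebra k A]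
  (S : Suzuki k A)

/-! ### The blocks of the Suzuki algebra -/

/-- The element `x_{ij}^{2s} χ_{ij}^t`. The values `t = 0` and `t = n`, which do not occur among
the four-dimensional `C_{st}`, are allowed as well. -/
def coeff (s t : ℕ) (i j : Fin 2) : A := S.x i j ^ (2 * s) * chi S.x i j t

/-- The subspace `C_{st}`, including the cases `t = 0` and `t = n`. -/
def block (s t : ℕ) : Submodule k A :=
  Submodule.span k (Set.range fun p : Fin 2 × Fin 2 => S.coeff s t p.1 p.2)

lemma coeff_mem_block (s t : ℕ) (i j : Fin 2) : S.coeff s t i j ∈ S.block s t :=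
  Submodule.subset_span ⟨(i, j), rfl⟩

lemma block_le {s t : ℕ} {V : Submodule k A} :
    S.block s t ≤ V ↔ ∀ i j, S.coeff s t i j ∈ V := by
  rw [block, Submodule.span_le, Set.range_subset_iff, Prod.forall]
  rfl

instance (s t : ℕ) : Module.Finite k (S.block s t) :=
  Module.Finite.span_of_finite k (Set.finite_range _)

lemma x_mul_x_of_ne (i : Fin 2) {j l : Fin 2} (h : j ≠ l) : S.x i j * S.x i l = 0 :=
  S.rel_odd i j i l (by revert i j l; decide)

lemma isComatrix_chi {t : ℕ} (ht : 1 ≤ t) : IsComatrix k fun i j => chi S.x i j t :=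
  fun i j => by rw [S.comul_chi i j t ht, Fin.sum_univ_two]

lemma isComatrix_x : IsComatrix k S.x := by
  simpa only [chi, mul_one] using S.isComatrix_chi le_rfl

theorem isComatrix_coeff {s : ℕ} (hs : 1 ≤ s) (t : ℕ) : IsComatrix k (S.coeff s t) := by
  have hpow : IsComatrix k fun i j => S.x i j ^ (2 * s) :=
    S.isComatrix_x.pow (fun i _ _ => S.x_mul_x_of_ne i) (by lia)
  obtain rfl | ht := Nat.eq_zero_or_pos t
  · exact fun i j => by simpa [coeff, chi] using hpow i j
  refine hpow.mul (S.isComatrix_chi ht) fun i l m h => ?_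
  obtain ⟨t, rfl⟩ := Nat.exists_eq_succ_of_ne_zero ht.ne'
  rw [chi, ← mul_assoc, pow_mul_eq_zero_of_mul_eq_zero (S.x_mul_x_of_ne i h) (by lia), zero_mul]

lemma isSubcoalgebra_block {s : ℕ} (hs : 1 ≤ s) (t : ℕ) : IsSubcoalgebra (S.block s t) :=
  (S.isComatrix_coeff hs t).isSubcoalgebra_span

lemma x_add_one_pow_two_mul (i j : Fin 2) (s : ℕ) :
    S.x (i + 1) (j + 1) ^ (2 * s) = S.x i j ^ (2 * s) := by
  simp only [pow_mul]
  congr 1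
  fin_cases i <;> fin_cases j
  exacts [S.rel_sq1.symm, S.rel_sq2.symm, S.rel_sq2, S.rel_sq1]

lemma coeff_add_one_add_one (s t : ℕ) (i j : Fin 2) :
    S.coeff s t (i + 1) (j + 1) = S.x i j ^ (2 * s) * chi S.x (i + 1) (j + 1) t := by
  rw [coeff, x_add_one_pow_two_mul]

lemma coeff_succ (s t : ℕ) (i j : Fin 2) :
    S.coeff s (t + 1) i j = S.x i j ^ (2 * s + 1) * chi S.x (i + 1) (j + 1) t := by
  rw [coeff, chi, pow_succ, mul_assoc]

lemma exists_coeff_eq_smul (s : ℕ) {t : ℕ} (h : t = 0 ∨ t = S.n) (i j : Fin 2) :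
    ∃ c : k, S.coeff s t i j = c • S.coeff s t (i + 1) (j + 1) := by
  obtain ⟨c, hc⟩ : ∃ c : k, chi S.x i j t = c • chi S.x (i + 1) (j + 1) t := by
    obtain rfl | rfl := h
    · exact ⟨1, by rw [one_smul, chi, chi]⟩
    have hlam : S.lam * S.lam = 1 := by rcases S.hlam with h | h <;> simp [h]
    fin_cases i <;> fin_cases j
    · exact ⟨1, by simpa using S.rel_chi2⟩
    · exact ⟨S.lam, by simp [S.rel_chi1, smul_smul, hlam]⟩
    · exact ⟨S.lam, S.rel_chi1⟩
    · exact ⟨1, by simpa using S.rel_chi2.symm⟩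
  exact ⟨c, by rw [coeff, hc, mul_smul_comm, ← S.x_add_one_pow_two_mul, coeff]⟩

/-- Multiply the relation `x₁₁^{2N} + μ x₁₂^{2N} = 1` by `x_{ij}`: only the summand of the
same parity of indices survives. -/
lemma exists_x_eq_smul_pow (i j : Fin 2) :
    ∃ c : k, c ≠ 0 ∧ S.x i j = c • S.x i j ^ (2 * S.N + 1) := by
  have hN : 2 * S.N ≠ 0 := by have := S.hN; lia
  have hμ : S.μ ≠ 0 := by rcases S.hμ with h | h <;> simp [h]
  have hrel : S.x i j = S.x 0 0 ^ (2 * S.N) * S.x i j + S.μ • (S.x 0 1 ^ (2 * S.N) * S.x i j) := by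
    rw [← smul_mul_assoc, ← add_mul, S.rel_mu, one_mul]
  have hzero (r : Fin 2) (h : Odd ((0 : Fin 2) + r + i + j : ℕ)) :
      S.x 0 r ^ (2 * S.N) * S.x i j = 0 :=
    pow_mul_eq_zero_of_mul_eq_zero (S.rel_odd 0 r i j h) hN
  have hpow (r : Fin 2) : S.x 1 (r + 1) ^ (2 * S.N) = S.x 0 r ^ (2 * S.N) :=
    S.x_add_one_pow_two_mul 0 r S.N
  have hodd : ∀ i j : Fin 2, if i = j then Odd ((0 : Fin 2) + (1 : Fin 2) + i + j : ℕ)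
      else Odd ((0 : Fin 2) + (0 : Fin 2) + i + j : ℕ) := by decide
  specialize hodd i j
  split_ifs at hodd with hij
  · rw [hzero 1 hodd, smul_zero, add_zero] at hrel
    refine ⟨1, one_ne_zero, ?_⟩
    subst hij
    fin_cases i
    · simpa [pow_succ] using hrel
    · simpa [pow_succ, ← hpow] using hrel
  · rw [hzero 0 hodd, zero_add] at hrel
    refine ⟨S.μ, hμ, ?_⟩
    fin_cases i <;> fin_cases j
    · exact absurd rfl hij
    · simpa [pow_succ] using hrel
    · simpa [pow_succ, ← hpow] using hrel
    · exact absurd rfl hij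

lemma block_N_one : S.block S.N 1 = Submodule.span k {S.x 0 0, S.x 0 1, S.x 1 0, S.x 1 1} := by
  choose c hc hpow using S.exists_x_eq_smul_pow
  have hx (i j : Fin 2) : S.x i j = c i j • S.coeff S.N 1 i j := by
    rw [coeff_succ, chi, mul_one, ← hpow]
  rw [← range_uncurry_fin_two S.x]
  refine le_antisymm (S.block_le.2 fun i j => ?_)
    (Submodule.span_le.2 (Set.range_subset_iff.2 fun p => ?_))
  · rw [← Submodule.smul_mem_iff _ (hc i j), ← hx]
    exact Submodule.subset_span ⟨(i, j), rfl⟩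
  · rw [hx]
    exact Submodule.smul_mem _ _ (S.coeff_mem_block S.N 1 p.1 p.2)

lemma block_eq_span (s t : ℕ) : S.block s t = Submodule.span k
    {S.x 0 0 ^ (2 * s) * chi S.x 0 0 t, S.x 0 1 ^ (2 * s) * chi S.x 0 1 t,
      S.x 0 0 ^ (2 * s) * chi S.x 1 1 t, S.x 0 1 ^ (2 * s) * chi S.x 1 0 t} := by
  have h11 : S.coeff s t 1 1 = S.x 0 0 ^ (2 * s) * chi S.x 1 1 t :=
    S.coeff_add_one_add_one s t 0 0
  have h10 : S.coeff s t 1 0 = S.x 0 1 ^ (2 * s) * chi S.x 1 0 t :=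
    S.coeff_add_one_add_one s t 0 1
  rw [block, range_uncurry_fin_two (S.coeff s t), h11, h10,
    Set.pair_comm (S.x 0 1 ^ (2 * s) * chi S.x 1 0 t)]
  rfl

/-! ### The decomposition into blocks -/

/-- The index `(s - 1, t)` of the block `C_{st}` containing the basis element with index
`p = (i, j, s - 1, t')`: row `i = 0` of the blocks with `t ≥ 1` and row `i = 1` of those with
`t < n` make up a basis of the algebra. -/
def blockIndex (p : Fin 2 × Fin 2 × Fin S.N × Fin S.n) : Fin S.N × Fin (S.n + 1) :=
  (p.2.2.1, if p.1 = 0 then p.2.2.2.succ else p.2.2.2.castSucc)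

/-- The members of the basis of the algebra adapted to its decomposition into blocks. -/
def basisCoeff (p : Fin 2 × Fin 2 × Fin S.N × Fin S.n) : A :=
  S.coeff ((S.blockIndex p).1 + 1) (S.blockIndex p).2 p.1 p.2.1

lemma span_range_basisCoeff : Submodule.span k (Set.range S.basisCoeff) = ⊤ := by
  have hsucc (r : Fin 2) (s : Fin S.N) (t : Fin S.n) :
      S.coeff (s + 1) (t + 1) 0 r ∈ Submodule.span k (Set.range S.basisCoeff) :=
    Submodule.subset_span ⟨(0, r, s, t), by simp [basisCoeff, blockIndex]⟩
  have hcast (r : Fin 2) (s : Fin S.N) (t : Fin S.n) :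
      S.coeff (s + 1) t 1 r ∈ Submodule.span k (Set.range S.basisCoeff) :=
    Submodule.subset_span ⟨(1, r, s, t), by simp [basisCoeff, blockIndex]⟩
  have hmem (r : Fin 2) (a : Fin (2 * S.N)) (t : Fin S.n) :
      S.x 0 r ^ ((a : ℕ) + 1) * chi S.x 1 (r + 1) t
        ∈ Submodule.span k (Set.range S.basisCoeff) := by
    obtain ⟨m, hm | hm⟩ := Nat.even_or_odd' (a : ℕ)
    · obtain rfl | hm0 := Nat.eq_zero_or_pos m
      · obtain ⟨c, -, hc⟩ := S.exists_x_eq_smul_pow 0 r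
        have hN := S.hN
        have h := hsucc r ⟨S.N - 1, by lia⟩ t
        rw [coeff_succ] at h
        rw [hm, mul_zero, zero_add, pow_one, hc, smul_mul_assoc]
        simpa [Nat.sub_add_cancel hN] using Submodule.smul_mem _ c h
      · have h := hsucc r ⟨m - 1, by lia⟩ t
        rw [coeff_succ] at h
        simpa [Nat.sub_add_cancel hm0, hm] using h
    · have h := hcast (r + 1) ⟨m, by lia⟩ t
      have hx : S.coeff (m + 1) t 1 (r + 1) = S.x 0 r ^ (2 * (m + 1)) * chi S.x 1 (r + 1) t :=
        S.coeff_add_one_add_one (m + 1) t 0 r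
      rwa [hm, add_assoc, ← mul_add_one, ← hx]
  rw [eq_top_iff, ← S.basis_span, Submodule.span_le]
  rintro _ ⟨⟨i, a, t⟩, rfl⟩
  fin_cases i
  · simpa using hmem 0 a t
  · simpa using hmem 1 a t

lemma linearIndependent_basisCoeff : LinearIndependent k S.basisCoeff := by
  refine linearIndependent_of_top_le_span_of_card_eq_finrank S.span_range_basisCoeff.ge ?_
  rw [Module.finrank_eq_card_basis (Module.Basis.mk S.basis_indep S.basis_span.ge)]
  simp only [Fintype.card_prod, Fintype.card_fin]
  ring

lemma block_le_span_basisCoeff (α : Fin S.N × Fin (S.n + 1)) :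
    S.block (α.1 + 1) α.2 ≤ Submodule.span k (S.basisCoeff '' (S.blockIndex ⁻¹' {α})) := by
  obtain ⟨s, t⟩ := α
  have hlast : (0 : Fin (S.n + 1)) ≠ Fin.last S.n := by
    have := S.hn
    exact Fin.ne_of_val_ne (by rw [Fin.val_zero, Fin.val_last]; lia)
  set V := Submodule.span k (S.basisCoeff '' (S.blockIndex ⁻¹' {(s, t)}))
  have hrow0 (j : Fin 2) (ht : t ≠ 0) : S.coeff (s + 1) t 0 j ∈ V := by
    obtain ⟨t, rfl⟩ := Fin.exists_succ_eq.2 ht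
    exact Submodule.subset_span ⟨(0, j, s, t), by simp [blockIndex, basisCoeff]⟩
  have hrow1 (j : Fin 2) (ht : t ≠ Fin.last S.n) : S.coeff (s + 1) t 1 j ∈ V := by
    obtain ⟨t, rfl⟩ := Fin.exists_castSucc_eq.2 ht
    exact Submodule.subset_span ⟨(1, j, s, t), by simp [blockIndex, basisCoeff]⟩
  refine S.block_le.2 fun i j => ?_
  match i with
  | 0 =>
    obtain rfl | ht := eq_or_ne t 0
    · obtain ⟨c, hc⟩ := S.exists_coeff_eq_smul (s + 1) (.inl rfl) 0 j
      exact hc ▸ V.smul_mem c (hrow1 (j + 1) hlast)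
    · exact hrow0 j ht
  | 1 =>
    obtain rfl | ht := eq_or_ne t (Fin.last S.n)
    · obtain ⟨c, hc⟩ := S.exists_coeff_eq_smul (s + 1) (.inr rfl) 1 j
      exact hc ▸ V.smul_mem c (hrow0 (j + 1) hlast.symm)
    · exact hrow1 j ht

theorem isInternal_block :
    DirectSum.IsInternal fun α : Fin S.N × Fin (S.n + 1) => S.block (α.1 + 1) α.2 := by
  refine DirectSum.isInternal_submodule_of_iSupIndep_of_iSup_eq_top ?_ ?_
  · exact (iSupIndep_span_image_fiber S.linearIndependent_basisCoeff S.blockIndex).mono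
      S.block_le_span_basisCoeff
  · rw [eq_top_iff, ← S.span_range_basisCoeff, Submodule.span_le]
    rintro _ ⟨p, rfl⟩
    exact Submodule.mem_iSup_of_mem (S.blockIndex p) (S.coeff_mem_block _ _ _ _)

/-! ### Dimensions of the blocks -/

lemma linearIndependent_coeff {s t : ℕ} (hs : 1 ≤ s) (hsN : s ≤ S.N) (ht : 1 ≤ t) (htn : t < S.n) :
    LinearIndependent k fun p : Fin 2 × Fin 2 => S.coeff s t p.1 p.2 := by
  let f (p : Fin 2 × Fin 2) : Fin 2 × Fin 2 × Fin S.N × Fin S.n :=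
    (p.1, p.2, ⟨s - 1, by lia⟩, if p.1 = 0 then ⟨t - 1, by lia⟩ else ⟨t, htn⟩)
  have hf : Function.Injective f := fun p q h => by
    simp only [f, Prod.mk.injEq] at h
    exact Prod.ext h.1 h.2.1
  convert S.linearIndependent_basisCoeff.comp f hf using 2 with p
  simp only [Function.comp_apply, basisCoeff, blockIndex, f]
  split_ifs <;> simp [Nat.sub_add_cancel hs, Nat.sub_add_cancel ht]

lemma finrank_block {s t : ℕ} (hs : 1 ≤ s) (hsN : s ≤ S.N) (ht : 1 ≤ t) (htn : t < S.n) :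
    Module.finrank k (S.block s t) = 4 :=
  finrank_span_eq_card (S.linearIndependent_coeff hs hsN ht htn)

lemma finrank_block_le_two {s t : ℕ} (h : t = 0 ∨ t = S.n) :
    Module.finrank k (S.block s t) ≤ 2 := by
  have hfin := Module.Finite.span_of_finite k (Set.finite_range fun j => S.coeff s t 0 j)
  have hle : S.block s t ≤ Submodule.span k (Set.range fun j => S.coeff s t 0 j) := by
    refine S.block_le.2 fun i j => ?_
    match i with
    | 0 => exact Submodule.subset_span ⟨j, rfl⟩
    | 1 =>
      obtain ⟨c, hc⟩ := S.exists_coeff_eq_smul s h 1 j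
      exact hc ▸ Submodule.smul_mem _ c (Submodule.subset_span ⟨j + 1, rfl⟩)
  exact (Submodule.finrank_mono hle).trans (finrank_range_le_card _)

end Suzuki

/-- A Hopf algebra automorphism as a homomorphism of coalgebras. -/
def IsHopfAut.toCoalgHom {k A : Type*} [Field k] [Ring A] [HopfAlgebra k A] {ψ : A ≃ₗ[k] A}
    (hψ : IsHopfAut k ψ) : A →ₗc[k] A where
  toLinearMap := ψ.toLinearMap
  counit_comp := LinearMap.ext hψ.2.2.2
  map_comp_comul := LinearMap.ext fun a => (hψ.2.2.1 a).symm

theorem stmt4_general {k A : Type*} [Field k] [CharZero k] [IsAlgClosed k] [Ring A]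
    [HopfAlgebra k A] (S : Suzuki k A) {s t : ℕ} (hs : 1 ≤ s) (hsN : s ≤ S.N) (ht : 1 ≤ t)
    (htn : t < S.n) (ψ : A →ₗc[k] A) (hψ : Function.Injective ψ) :
    ∃ s' t' : ℕ, 1 ≤ s' ∧ s' ≤ S.N ∧ 1 ≤ t' ∧ t' < S.n ∧
      (S.block s t).map (ψ : A →ₗ[k] A) = S.block s' t' := by
  have hli : LinearIndependent k fun p : Fin 2 × Fin 2 => ψ (S.coeff s t p.1 p.2) :=
    (S.linearIndependent_coeff hs hsN ht htn).map' (ψ : A →ₗ[k] A) (LinearMap.ker_eq_bot.2 hψ)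
  let _ := S.isInternal_block.chooseDecomposition
  obtain ⟨⟨s', t'⟩, hmem⟩ := ((S.isComatrix_coeff hs t).map ψ).exists_forall_mem
    (M := fun α : Fin S.N × Fin (S.n + 1) => S.block (α.1 + 1) α.2)
    (fun α => S.isSubcoalgebra_block (Nat.le_add_left 1 α.1) α.2) hli
  have hle : (S.block s t).map (ψ : A →ₗ[k] A) ≤ S.block (s' + 1) t' :=
    Submodule.map_le_iff_le_comap.2 (S.block_le.2 hmem)
  have hdim : Module.finrank k ((S.block s t).map (ψ : A →ₗ[k] A)) = 4 := by
    rw [← S.finrank_block hs hsN ht htn]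
    exact (LinearEquiv.finrank_eq (Submodule.equivMapOfInjective (ψ : A →ₗ[k] A) hψ _)).symm
  have hdim_le := Submodule.finrank_mono hle
  have ht' : ¬((t' : ℕ) = 0 ∨ (t' : ℕ) = S.n) := fun h => by
    have := S.finrank_block_le_two (s := s' + 1) h
    lia
  have ht'1 : 1 ≤ (t' : ℕ) := by lia
  have ht'n : (t' : ℕ) < S.n := by lia
  refine ⟨s' + 1, t', by lia, by lia, ht'1, ht'n, Submodule.eq_of_le_of_finrank_eq hle ?_⟩
  rw [hdim, S.finrank_block (by lia) (by lia) ht'1 ht'n]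

/-- for every Hopf algebra automorphism ψ of A (with n of the given parity),
there are 1 ≤ s ≤ N and 1 ≤ t ≤ n-1 with ψ(C_{N1}) = C_{st}. -/
theorem stmt4 (k A : Type*) [Field k] [CharZero k] [IsAlgClosed k]
    [Ring A] [HopfAlgebra k A] (S : Suzuki k A) (hpar : Odd S.n)
    (ψ : A ≃ₗ[k] A) (hψ : IsHopfAut k ψ) :
    ∃ s t : ℕ, 1 ≤ s ∧ s ≤ S.N ∧ 1 ≤ t ∧ t ≤ S.n - 1 ∧
      Submodule.map ψ.toLinearMap
          (Submodule.span k {S.x 0 0, S.x 0 1, S.x 1 0, S.x 1 1})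
        = Submodule.span k
            {S.x 0 0 ^ (2 * s) * chi S.x 0 0 t, S.x 0 1 ^ (2 * s) * chi S.x 0 1 t,
             S.x 0 0 ^ (2 * s) * chi S.x 1 1 t, S.x 0 1 ^ (2 * s) * chi S.x 1 0 t} := by
  obtain ⟨s, t, hs, hsN, ht, htn, h⟩ :=
    stmt4_general S S.hN le_rfl le_rfl S.hn hψ.toCoalgHom ψ.injective
  exact ⟨s, t, hs, hsN, ht, Nat.le_sub_one_of_lt htn, by
    rw [← S.block_eq_span, ← S.block_N_one]; exact h⟩
end
end

section
/- Let 1 ≤ s ≤ N, 1 ≤ t ≤ n − 1 with t even, and set P = x11^{2s}χ11^t, Q = x11^{2s}χ22^t, R = x12^{2s}χ12^t, T = x12^{2s}χ21^t in A = A_{Nn}^{μλ}. For scalars a1, a2, a3, b1, b2, b3 ∈ k put y = a1·P + (1−a1)·Q + a2·R + a3·T and z = b1·P + (1−b1)·Q + b2·R + b3·T; then y² = z² if and only if (a1−b1)(1−a1−b1) = 0, a2·a3 = b2·b3, and moreover a1 = b1, a2² = b2², a3² = b3² when 2t ≠ n, while a2² + λ·a3² = b2² + λ·b3² when 2t = n.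 Likewise, for scalars d1, d2, d3, e1, e2, e3 ∈ k put u = d1·P − d1·Q + d2·R + d3·T and v = e1·P − e1·Q + e2·R + e3·T; then u² = v² if and only if d1² = e1², d2·d3 = e2·e3, and moreover d2² = e2², d3² = e3² when 2t ≠ n, while d2² + λ·d3² = e2² + λ·e3² when 2t = n. -/
/-!
Put `(a, b) = (x₁₁, x₂₂)` and `(c, d) = (x₁₂, x₂₁)`. Since `a c = c a = 0` and `a ^ 2N` acts on the
right ideal `a A` as a nonzero scalar, the squares split into their parts in `a A` and `c A`, and
each pair can be treated on its own.

For one pair, `a² = b²` is central in the algebra generated by `a` and `b`, so for `t` even `P` and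
`Q` commute, `P²` and `Q²` are powers of `a` times the two alternating words of length `2t`, and
`P Q` is a power of `a`. An alternating word of length `n + j` folds back onto the other one of
length `n - j`, and `a ^ 2N` only contributes scalars, so these three elements are multiples of
basis vectors. They are linearly independent, except that `Q² = λ P²` when `2t = n`, where `λ`
is to be read as `1` for the first pair; comparing coefficients gives the theorem.
-/

open scoped TensorProduct

noncomputable section

section AltProd

variable {M : Type*} [Monoid M]

/-- The alternating product `a * b * a * ⋯` with `m` factors. It is `chi` for an arbitrary pair of
elements of a monoid, so that both pairs `x₁₁, x₂₂` and `x₁₂, x₂₁` are instances. -/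
def altProd : M → M → ℕ → M
  | _, _, 0 => 1
  | a, b, m + 1 => a * altProd b a m

theorem chi_eq_altProd {A : Type*} [Ring A] (x : Fin 2 → Fin 2 → A) (i j : Fin 2) (m : ℕ) :
    chi x i j m = altProd (x i j) (x (i + 1) (j + 1)) m := by
  induction m generalizing i j with
  | zero => rfl
  | succ m ih =>
    have add_one_add_one (i : Fin 2) : i + 1 + 1 = i := by revert i; decide
    rw [chi, altProd, ih, add_one_add_one, add_one_add_one]

variable {a b : M}

theorem altProd_two_mul (a b : M) (r : ℕ) : altProd a b (2 * r) = (a * b) ^ r := by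
  induction r with
  | zero => simp [altProd]
  | succ r ih => rw [Nat.mul_succ, altProd, altProd, ih, pow_succ', mul_assoc]

theorem commute_altProd {x : M} (ha : Commute x a) (hb : Commute x b) (m : ℕ) :
    Commute x (altProd a b m) := by
  induction m generalizing a b with
  | zero => exact Commute.one_right x
  | succ m ih => exact ha.mul_right (ih hb ha)

theorem pow_two_mul_eq_of_sq_eq (hab : a ^ 2 = b ^ 2) (m : ℕ) : a ^ (2 * m) = b ^ (2 * m) := by
  rw [pow_mul, hab, ← pow_mul]

theorem commute_pow_two_mul_of_sq_eq (hab : a ^ 2 = b ^ 2) (m : ℕ) : Commute (a ^ (2 * m)) b :=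
  pow_two_mul_eq_of_sq_eq hab m ▸ Commute.pow_self b (2 * m)

theorem commute_pow_two_mul_altProd (hab : a ^ 2 = b ^ 2) (m r : ℕ) :
    Commute (a ^ (2 * m)) (altProd a b r) :=
  commute_altProd (Commute.pow_self a _) (commute_pow_two_mul_of_sq_eq hab m) r

theorem altProd_mul_self {t : ℕ} (ht : Even t) :
    altProd a b t * altProd a b t = altProd a b (2 * t) := by
  obtain ⟨r, rfl⟩ := ht
  rw [← two_mul, altProd_two_mul, altProd_two_mul, ← pow_add, two_mul]

theorem mul_mul_mul_swap_of_sq_eq (hab : a ^ 2 = b ^ 2) : a * b * (b * a) = a ^ 4 :=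
  calc a * b * (b * a) = a * b ^ 2 * a := by simp only [sq, mul_assoc]
    _ = a ^ 4 := by simp only [← hab, pow_succ, pow_zero, one_mul, mul_assoc]

theorem altProd_mul_altProd_swap (hab : a ^ 2 = b ^ 2) {t : ℕ} (ht : Even t) :
    altProd a b t * altProd b a t = a ^ (2 * t) := by
  obtain ⟨r, rfl⟩ := ht
  have hcomm : Commute (a * b) (b * a) := by
    rw [Commute, SemiconjBy, mul_mul_mul_swap_of_sq_eq hab, mul_mul_mul_swap_of_sq_eq hab.symm]
    exact pow_two_mul_eq_of_sq_eq hab 2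
  rw [← two_mul, altProd_two_mul, altProd_two_mul, ← hcomm.mul_pow, mul_mul_mul_swap_of_sq_eq hab,
    show 2 * (2 * r) = 4 * r by ring, pow_mul]

end AltProd

section Algebra

variable {k A : Type*} [CommRing k] [Ring A] [Algebra k A] {a b : A}

theorem eq_smul_symm_of_mul_self_eq_one {R X : Type*} [Monoid R] [MulAction R X] {l : R}
    (hl : l * l = 1) {x y : X} (h : x = l • y) : y = l • x := by
  rw [h, smul_smul, hl, one_smul]

/-- The length `n = r + j` is written as a sum so that the induction on `j` can move letters from
one word to the other. -/
theorem altProd_swap_add_two_mul {l : k} (hl : l * l = 1) (hab : a ^ 2 = b ^ 2) {r : ℕ} (j : ℕ)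
    (h : altProd b a (r + j) = l • altProd a b (r + j)) :
    altProd b a (r + 2 * j) = l • (a ^ (2 * j) * altProd a b r) := by
  induction j generalizing a b r with
  | zero => simpa using h
  | succ j ih =>
    have hswap : altProd a b (r + 1 + j) = l • altProd b a (r + 1 + j) := by
      rw [show r + 1 + j = r + (j + 1) by ring]
      exact eq_smul_symm_of_mul_self_eq_one hl h
    calc altProd b a (r + 2 * (j + 1)) = b * altProd a b (r + 1 + 2 * j) := by
          rw [show r + 2 * (j + 1) = r + 1 + 2 * j + 1 by ring, altProd]
      _ = l • (b ^ (2 * j + 1 + 1) * altProd a b r) := by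
          rw [ih hab.symm hswap, altProd, mul_smul_comm, pow_succ, pow_succ']
          simp only [mul_assoc]
      _ = l • (a ^ (2 * (j + 1)) * altProd a b r) := by
          rw [pow_two_mul_eq_of_sq_eq hab, Nat.mul_succ]

theorem pow_succ_eq_smul_pow_mod {m : k} {M : ℕ} (h : a ^ (M + 1) = m • a) (e : ℕ) :
    a ^ (e + 1) = m ^ (e / M) • a ^ (e % M + 1) := by
  have hperiod (q i : ℕ) : a ^ (M * q + i + 1) = m ^ q • a ^ (i + 1) := by
    induction q with
    | zero => simp
    | succ q ih =>
      calc a ^ (M * (q + 1) + i + 1) = a ^ (M * q + i) * a ^ (M + 1) := by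
            rw [← pow_add]; congr 1; ring
        _ = m ^ (q + 1) • a ^ (i + 1) := by
            rw [h, mul_smul_comm, ← pow_succ, ih, smul_smul, pow_succ' m]
  conv_lhs => rw [← Nat.div_add_mod e M]
  exact hperiod _ _

theorem smul_pow_succ_eq_self {c : A} {r r' : k} {M : ℕ} (hM : M ≠ 0)
    (h : r • a ^ M + r' • c ^ M = 1) (hca : c * a = 0) : r • a ^ (M + 1) = a := by
  obtain ⟨M, rfl⟩ := Nat.exists_eq_succ_of_ne_zero hM
  have hc : c ^ (M + 1) * a = 0 := by rw [pow_succ, mul_assoc, hca, mul_zero]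
  calc r • a ^ (M + 1 + 1) = (r • a ^ (M + 1) + r' • c ^ (M + 1)) * a := by
        rw [add_mul, smul_mul_assoc, smul_mul_assoc, hc, smul_zero, add_zero, ← pow_succ]
    _ = a := by rw [h, one_mul]

/-- The combination `p P + q Q` of `P = a ^ (2 s) * (a b a ⋯)` and `Q = a ^ (2 s) * (b a b ⋯)`, with
`t` alternating letters each: the part in one pair of generators of the elements to be squared. -/
def altComb (a b : A) (s t : ℕ) (p q : k) : A :=
  p • (a ^ (2 * s) * altProd a b t) + q • (a ^ (2 * s) * altProd b a t)

theorem altComb_sq (hab : a ^ 2 = b ^ 2) (s : ℕ) {t : ℕ} (ht : Even t) (p q : k) :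
    altComb a b s t p q ^ 2 =
      p ^ 2 • (a ^ (4 * s) * altProd a b (2 * t)) + q ^ 2 • (a ^ (4 * s) * altProd b a (2 * t)) +
        (2 * (p * q)) • a ^ (4 * s + 2 * t) := by
  have hpow : a ^ (2 * s) * a ^ (2 * s) = a ^ (4 * s) := by rw [← pow_add]; congr 1; ring
  have hu : Commute (altProd a b t) (a ^ (2 * s)) := (commute_pow_two_mul_altProd hab s t).symm
  have hv : Commute (altProd b a t) (a ^ (2 * s)) := by
    rw [pow_two_mul_eq_of_sq_eq hab]
    exact (commute_pow_two_mul_altProd hab.symm s t).symm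
  rw [altComb, sq]
  simp only [add_mul, mul_add, smul_mul_smul_comm, hu.mul_mul_mul_comm, hv.mul_mul_mul_comm, hpow,
    altProd_mul_self ht, altProd_mul_altProd_swap hab ht, altProd_mul_altProd_swap hab.symm ht,
    ← pow_two_mul_eq_of_sq_eq hab, ← pow_add]
  module

theorem dvd_altComb {s : ℕ} (hs : s ≠ 0) (t : ℕ) (p q : k) : a ∣ altComb a b s t p q := by
  have ha : a ∣ a ^ (2 * s) := dvd_pow_self a (by omega)
  exact dvd_add (dvd_smul_of_dvd p (ha.mul_right _)) (dvd_smul_of_dvd q (ha.mul_right _))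

theorem altComb_mul_eq_zero {c y : A} (hab : a ^ 2 = b ^ 2) (hac : a * c = 0) (hy : c ∣ y) {s : ℕ}
    (hs : s ≠ 0) (t : ℕ) (p q : k) : altComb a b s t p q * y = 0 := by
  obtain ⟨v, rfl⟩ := hy
  have hpow : a ^ (2 * s) * c = 0 := by
    rw [← Nat.sub_one_add_one (show 2 * s ≠ 0 by omega), pow_succ, mul_assoc, hac, mul_zero]
  have hu : a ^ (2 * s) * altProd a b t = altProd a b t * a ^ (2 * s) :=
    commute_pow_two_mul_altProd hab s t
  have hv : a ^ (2 * s) * altProd b a t = altProd b a t * a ^ (2 * s) := by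
    rw [pow_two_mul_eq_of_sq_eq hab]
    exact commute_pow_two_mul_altProd hab.symm s t
  rw [altComb, hu, hv, ← mul_assoc, add_mul, smul_mul_assoc, smul_mul_assoc, mul_assoc, mul_assoc,
    hpow, mul_zero, mul_zero, smul_zero, smul_zero, add_zero, zero_mul]

end Algebra

/-- The relations that the Suzuki algebra imposes on each of the pairs `x₁₁, x₂₂` and `x₁₂, x₂₁`,
with the independence of the corresponding half of its basis. The scalars `m` and `l` are `1` and
`1` for the first pair, `μ` and `λ` for the second. -/
structure IsAltPair (k : Type*) {A : Type*} [Field k] [Ring A] [Algebra k A] (a b : A)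
    (N n : ℕ) (m l : k) : Prop where
  N_ne_zero : N ≠ 0
  m_ne_zero : m ≠ 0
  l_mul_self : l * l = 1
  sq_eq : a ^ 2 = b ^ 2
  altProd_swap : altProd b a n = l • altProd a b n
  pow_succ_eq : a ^ (2 * N + 1) = m • a
  linearIndependent : LinearIndependent k fun p : Fin (2 * N) × Fin n =>
    a ^ ((p.1 : ℕ) + 1) * altProd b a (p.2 : ℕ)

namespace IsAltPair

variable {k A : Type*} [Field k] [Ring A] [Algebra k A] {a b c d : A} {N N' n s t : ℕ}
  {m m' l l' : k}

theorem linearIndependent_pow_mul_altProd (h : IsAltPair k a b N n m l) {ι : Type*} {e : ι → ℕ}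
    (he : ∀ i, e i ≠ 0) {f : ι → ℕ} (hf : Function.Injective f) (hfn : ∀ i, f i < n) :
    LinearIndependent k fun i => a ^ e i * altProd b a (f i) := by
  have hN : 0 < 2 * N := by have := h.N_ne_zero; omega
  let g (i : ι) : Fin (2 * N) × Fin n := (⟨(e i - 1) % (2 * N), Nat.mod_lt _ hN⟩, ⟨f i, hfn i⟩)
  have hg : Function.Injective g := fun i j hij => hf (congrArg (fun p => (p.2 : ℕ)) hij)
  convert (h.linearIndependent.comp g hg).units_smul
    fun i => Units.mk0 (m ^ ((e i - 1) / (2 * N))) (pow_ne_zero _ h.m_ne_zero) using 1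
  funext i
  rw [← Nat.sub_one_add_one (he i), pow_succ_eq_smul_pow_mod h.pow_succ_eq]
  simp [g, Units.smul_def]

theorem linearIndependent_altProd_of_lt (h : IsAltPair k a b N n m l) {e g r : ℕ} (he : e ≠ 0)
    (hg : g ≠ 0) (hr : 2 ≤ r) (hrn : r < n) :
    LinearIndependent k ![a ^ e * altProd a b r, a ^ e * altProd b a r, a ^ g] := by
  obtain ⟨r, rfl⟩ := Nat.exists_eq_add_of_le' hr
  convert h.linearIndependent_pow_mul_altProd (e := ![e + 1, e, g]) (f := ![r + 1, r + 2, 0])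
    ?_ ?_ ?_ using 1
  · funext i
    fin_cases i <;> simp [altProd, pow_succ, mul_assoc]
  · simp [Fin.forall_fin_succ, he, hg]
  · simp [Function.Injective, Fin.forall_fin_succ]
  · have hlt : r + 1 < n ∧ r + 2 < n ∧ 0 < n := by omega
    simpa [Fin.forall_fin_succ] using hlt

theorem linearIndependent_altProd_of_gt (h : IsAltPair k a b N n m l) {e g r : ℕ} (hg : g ≠ 0)
    (hr : n < r) (hrn : r + 2 ≤ 2 * n) :
    LinearIndependent k ![a ^ e * altProd a b r, a ^ e * altProd b a r, a ^ g] := by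
  obtain ⟨i, j, rfl, rfl⟩ : ∃ i j, n = i + j ∧ r = i + 2 * j :=
    ⟨2 * n - r, r - n, by omega, by omega⟩
  have hba : altProd b a (i + 2 * j) = l • (a ^ (2 * j) * altProd a b i) :=
    altProd_swap_add_two_mul h.l_mul_self h.sq_eq j h.altProd_swap
  have hab : altProd a b (i + 2 * j) = l • (a ^ (2 * j) * altProd b a i) := by
    rw [pow_two_mul_eq_of_sq_eq h.sq_eq]
    exact altProd_swap_add_two_mul h.l_mul_self h.sq_eq.symm j
      (eq_smul_symm_of_mul_self_eq_one h.l_mul_self h.altProd_swap)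
  let u : kˣ := ⟨l, l, h.l_mul_self, h.l_mul_self⟩
  have hli := h.linearIndependent_altProd_of_lt (e := e + 2 * j) (g := g) (r := i)
    (by omega) hg (by omega) (by omega)
  convert (hli.comp ![1, 0, 2] (by decide)).units_smul ![u, u, 1] using 1
  funext i
  fin_cases i <;> simp [u, hab, hba, Units.smul_def, pow_add, mul_assoc]

theorem linearIndependent_altProd_of_ne (h : IsAltPair k a b N n m l) {e g r : ℕ} (he : e ≠ 0)
    (hg : g ≠ 0) (hr : 2 ≤ r) (hrn : r + 2 ≤ 2 * n) (hne : r ≠ n) :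
    LinearIndependent k ![a ^ e * altProd a b r, a ^ e * altProd b a r, a ^ g] := by
  rcases hne.lt_or_gt with hlt | hgt
  · exact h.linearIndependent_altProd_of_lt he hg hr hlt
  · exact h.linearIndependent_altProd_of_gt hg hgt hrn

theorem linearIndependent_altProd_self (h : IsAltPair k a b N n m l) {e g : ℕ} (hg : g ≠ 0)
    (hn : 2 ≤ n) : LinearIndependent k ![a ^ e * altProd a b n, a ^ g] := by
  obtain ⟨n, rfl⟩ := Nat.exists_eq_add_of_le' hn
  convert h.linearIndependent_pow_mul_altProd (e := ![e + 1, g]) (f := ![n + 1, 0])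
    ?_ ?_ ?_ using 1
  · funext i
    fin_cases i <;> simp [altProd, pow_succ, mul_assoc]
  · simp [Fin.forall_fin_succ, hg]
  · simp [Function.Injective, Fin.forall_fin_succ]
  · simp [Fin.forall_fin_succ]

theorem altComb_sq_eq_iff_of_ne [NeZero (2 : k)] (h : IsAltPair k a b N n m l) (hs : s ≠ 0)
    (ht : Even t) (ht₀ : t ≠ 0) (htn : t < n) (hne : 2 * t ≠ n) {p q p' q' : k} :
    altComb a b s t p q ^ 2 = altComb a b s t p' q' ^ 2 ↔
      p * q = p' * q' ∧ p ^ 2 = p' ^ 2 ∧ q ^ 2 = q' ^ 2 := by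
  rw [altComb_sq h.sq_eq s ht, altComb_sq h.sq_eq s ht]
  have hli := h.linearIndependent_altProd_of_ne (e := 4 * s) (g := 4 * s + 2 * t) (r := 2 * t)
    (by omega) (by omega) (by omega) (by omega) hne
  constructor
  · intro heq
    have hcoeff := hli.eq_coords_of_eq (f := ![p ^ 2, q ^ 2, 2 * (p * q)])
      (g := ![p' ^ 2, q' ^ 2, 2 * (p' * q')]) (by simpa [Fin.sum_univ_three] using heq)
    exact ⟨mul_left_cancel₀ two_ne_zero (hcoeff 2), hcoeff 0, hcoeff 1⟩
  · rintro ⟨hpq, hp, hq⟩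
    rw [hpq, hp, hq]

theorem altComb_sq_eq_iff_of_eq [NeZero (2 : k)] (h : IsAltPair k a b N n m l)
    (ht : Even t) (ht₀ : t ≠ 0) (hn : 2 * t = n) {p q p' q' : k} :
    altComb a b s t p q ^ 2 = altComb a b s t p' q' ^ 2 ↔
      p * q = p' * q' ∧ p ^ 2 + l * q ^ 2 = p' ^ 2 + l * q' ^ 2 := by
  have hsq (p q : k) : altComb a b s t p q ^ 2 =
      (p ^ 2 + l * q ^ 2) • (a ^ (4 * s) * altProd a b n) +
        (2 * (p * q)) • a ^ (4 * s + 2 * t) := by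
    rw [altComb_sq h.sq_eq s ht, hn, h.altProd_swap, mul_smul_comm]
    module
  have hli := h.linearIndependent_altProd_self (e := 4 * s) (g := 4 * s + 2 * t)
    (by omega) (by omega)
  rw [hsq, hsq]
  constructor
  · intro heq
    have hcoeff := hli.eq_coords_of_eq (f := ![p ^ 2 + l * q ^ 2, 2 * (p * q)])
      (g := ![p' ^ 2 + l * q' ^ 2, 2 * (p' * q')]) (by simpa [Fin.sum_univ_two] using heq)
    exact ⟨mul_left_cancel₀ two_ne_zero (hcoeff 1), hcoeff 0⟩
  · rintro ⟨hpq, hl⟩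
    rw [hpq, hl]

theorem altComb_sq_eq_iff [NeZero (2 : k)] (h : IsAltPair k a b N n m l) (hs : s ≠ 0)
    (ht : Even t) (ht₀ : t ≠ 0) (htn : t < n) {p q p' q' : k} :
    altComb a b s t p q ^ 2 = altComb a b s t p' q' ^ 2 ↔
      p * q = p' * q' ∧ (2 * t ≠ n → p ^ 2 = p' ^ 2 ∧ q ^ 2 = q' ^ 2) ∧
        (2 * t = n → p ^ 2 + l * q ^ 2 = p' ^ 2 + l * q' ^ 2) := by
  by_cases hn : 2 * t = n
  · simp only [h.altComb_sq_eq_iff_of_eq ht ht₀ hn, hn, ne_eq, not_true_eq_false, false_imp_iff,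
      true_imp_iff, true_and]
  · simp only [h.altComb_sq_eq_iff_of_ne hs ht ht₀ htn hn, hn, ne_eq, not_false_eq_true,
      false_imp_iff, true_imp_iff, and_true]

theorem pow_mul_of_dvd (h : IsAltPair k a b N n m l) {x : A} (hx : a ∣ x) :
    a ^ (2 * N) * x = m • x := by
  obtain ⟨u, rfl⟩ := hx
  rw [← mul_assoc, ← pow_succ, h.pow_succ_eq, smul_mul_assoc]

theorem pow_mul_eq_zero_of_dvd (h : IsAltPair k a b N n m l) (hac : a * c = 0) {y : A}
    (hy : c ∣ y) : a ^ (2 * N) * y = 0 := by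
  obtain ⟨v, rfl⟩ := hy
  have hN : 2 * N ≠ 0 := by have := h.N_ne_zero; omega
  rw [← Nat.sub_one_add_one hN, pow_succ, mul_assoc, ← mul_assoc a, hac, zero_mul, mul_zero]

theorem add_eq_add_iff_of_dvd (h : IsAltPair k a b N n m l) (hac : a * c = 0) {x x' y y' : A}
    (hx : a ∣ x) (hx' : a ∣ x') (hy : c ∣ y) (hy' : c ∣ y') :
    x + y = x' + y' ↔ x = x' ∧ y = y' := by
  refine ⟨fun heq => ?_, fun ⟨hxx', hyy'⟩ => by rw [hxx', hyy']⟩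
  have hxx' : x = x' := by
    have hmul := congrArg (a ^ (2 * N) * ·) heq
    simp only [mul_add, h.pow_mul_of_dvd hx, h.pow_mul_of_dvd hx', h.pow_mul_eq_zero_of_dvd hac hy,
      h.pow_mul_eq_zero_of_dvd hac hy', add_zero] at hmul
    exact smul_right_injective A h.m_ne_zero hmul
  subst hxx'
  exact ⟨rfl, add_left_cancel heq⟩

theorem altComb_add_altComb_sq (h : IsAltPair k a b N n m l) (h' : IsAltPair k c d N' n m' l')
    (hac : a * c = 0) (hca : c * a = 0) (hs : s ≠ 0) (p q r w : k) :
    (altComb a b s t p q + altComb c d s t r w) ^ 2 =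
      altComb a b s t p q ^ 2 + altComb c d s t r w ^ 2 := by
  have hUV := altComb_mul_eq_zero h.sq_eq hac (dvd_altComb (b := d) hs t r w) hs t p q
  have hVU := altComb_mul_eq_zero h'.sq_eq hca (dvd_altComb (b := b) hs t p q) hs t r w
  simp only [sq, add_mul, mul_add, hUV, hVU, add_zero, zero_add]

theorem altComb_add_altComb_sq_eq_iff (h : IsAltPair k a b N n m l)
    (h' : IsAltPair k c d N' n m' l') (hac : a * c = 0) (hca : c * a = 0) (hs : s ≠ 0)
    {p q r w p' q' r' w' : k} :
    (altComb a b s t p q + altComb c d s t r w) ^ 2 =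
        (altComb a b s t p' q' + altComb c d s t r' w') ^ 2 ↔
      altComb a b s t p q ^ 2 = altComb a b s t p' q' ^ 2 ∧
        altComb c d s t r w ^ 2 = altComb c d s t r' w' ^ 2 := by
  have dvd_sq (a b : A) (p q : k) : a ∣ altComb a b s t p q ^ 2 :=
    dvd_pow (dvd_altComb hs t p q) two_ne_zero
  rw [h.altComb_add_altComb_sq h' hac hca hs, h.altComb_add_altComb_sq h' hac hca hs,
    h.add_eq_add_iff_of_dvd hac (dvd_sq a b p q) (dvd_sq a b p' q') (dvd_sq c d r w)
      (dvd_sq c d r' w')]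

end IsAltPair

section General

variable {k A : Type*} [Field k] [NeZero (2 : k)] [Ring A] [Algebra k A] {a b c d : A}
  {N N' n s t : ℕ} {m m' l : k}

theorem altComb_one_sub_sq_eq_iff (h : IsAltPair k a b N n m 1) (hs : s ≠ 0) (ht : Even t)
    (ht₀ : t ≠ 0) (htn : t < n) {p p' : k} :
    altComb a b s t p (1 - p) ^ 2 = altComb a b s t p' (1 - p') ^ 2 ↔
      (p - p') * (1 - p - p') = 0 ∧ (2 * t ≠ n → p = p') := by
  rw [h.altComb_sq_eq_iff hs ht ht₀ htn]
  constructor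
  · rintro ⟨hmul, hne, -⟩
    refine ⟨by linear_combination hmul, fun hn => ?_⟩
    obtain ⟨hp, hq⟩ := hne hn
    exact mul_left_cancel₀ two_ne_zero (by linear_combination hp - hq)
  · rintro ⟨hmul, hne⟩
    exact ⟨by linear_combination hmul, fun hn => by rw [hne hn]; exact ⟨rfl, rfl⟩,
      fun _ => by linear_combination -2 * hmul⟩

theorem altComb_neg_sq_eq_iff (h : IsAltPair k a b N n m 1) (hs : s ≠ 0) (ht : Even t)
    (ht₀ : t ≠ 0) (htn : t < n) {p p' : k} :
    altComb a b s t p (-p) ^ 2 = altComb a b s t p' (-p') ^ 2 ↔ p ^ 2 = p' ^ 2 := by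
  rw [h.altComb_sq_eq_iff hs ht ht₀ htn]
  constructor
  · rintro ⟨hmul, -⟩
    linear_combination -hmul
  · intro hp
    exact ⟨by linear_combination -hp, fun _ => ⟨hp, by linear_combination hp⟩,
      fun _ => by linear_combination 2 * hp⟩

theorem stmt8_general (h : IsAltPair k a b N n m 1) (h' : IsAltPair k c d N' n m' l)
    (hac : a * c = 0) (hca : c * a = 0) (hs : s ≠ 0) (ht₀ : t ≠ 0) (htn : t < n)
    (ht : Even t) {P Q R T : A} (hP : P = a ^ (2 * s) * altProd a b t)
    (hQ : Q = a ^ (2 * s) * altProd b a t) (hR : R = c ^ (2 * s) * altProd c d t)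
    (hT : T = c ^ (2 * s) * altProd d c t) (a1 a2 a3 b1 b2 b3 d1 d2 d3 e1 e2 e3 : k) :
    ((a1 • P + (1 - a1) • Q + a2 • R + a3 • T) ^ 2
        = (b1 • P + (1 - b1) • Q + b2 • R + b3 • T) ^ 2
      ↔ (a1 - b1) * (1 - a1 - b1) = 0 ∧ a2 * a3 = b2 * b3 ∧
        (2 * t ≠ n → a1 = b1 ∧ a2 ^ 2 = b2 ^ 2 ∧ a3 ^ 2 = b3 ^ 2) ∧
        (2 * t = n → a2 ^ 2 + l * a3 ^ 2 = b2 ^ 2 + l * b3 ^ 2))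
    ∧ ((d1 • P - d1 • Q + d2 • R + d3 • T) ^ 2
        = (e1 • P - e1 • Q + e2 • R + e3 • T) ^ 2
      ↔ d1 ^ 2 = e1 ^ 2 ∧ d2 * d3 = e2 * e3 ∧
        (2 * t ≠ n → d2 ^ 2 = e2 ^ 2 ∧ d3 ^ 2 = e3 ^ 2) ∧
        (2 * t = n → d2 ^ 2 + l * d3 ^ 2 = e2 ^ 2 + l * e3 ^ 2)) := by
  have hcomb (p q r w : k) : p • P + q • Q + r • R + w • T =
      altComb a b s t p q + altComb c d s t r w := by
    rw [hP, hQ, hR, hT, altComb, altComb, add_assoc (_ + _)]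
  simp only [sub_eq_add_neg (_ • P), ← neg_smul, hcomb,
    h.altComb_add_altComb_sq_eq_iff h' hac hca hs, altComb_one_sub_sq_eq_iff h hs ht ht₀ htn,
    altComb_neg_sq_eq_iff h hs ht ht₀ htn, h'.altComb_sq_eq_iff hs ht ht₀ htn]
  tauto

end General

namespace Suzuki

variable {k A : Type*} [Field k] [CharZero k] [IsAlgClosed k] [Ring A] [HopfAlgebra k A]

theorem x00_mul_x01 (S : Suzuki k A) : S.x 0 0 * S.x 0 1 = 0 :=
  S.rel_odd 0 0 0 1 (by decide)

theorem x01_mul_x00 (S : Suzuki k A) : S.x 0 1 * S.x 0 0 = 0 :=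
  S.rel_odd 0 1 0 0 (by decide)

theorem isAltPair_x00_x11 (S : Suzuki k A) :
    IsAltPair k (S.x 0 0) (S.x 1 1) S.N S.n 1 1 where
  N_ne_zero := Nat.one_le_iff_ne_zero.1 S.hN
  m_ne_zero := one_ne_zero
  l_mul_self := one_mul 1
  sq_eq := S.rel_sq1
  altProd_swap := by
    rw [one_smul]
    exact chi_eq_altProd S.x 1 1 S.n ▸ chi_eq_altProd S.x 0 0 S.n ▸ S.rel_chi2.symm
  pow_succ_eq := by
    have hN := S.hN
    have hrel : (1 : k) • S.x 0 0 ^ (2 * S.N) + S.μ • S.x 0 1 ^ (2 * S.N) = 1 := by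
      rw [one_smul, S.rel_mu]
    exact eq_smul_symm_of_mul_self_eq_one (one_mul 1)
      (smul_pow_succ_eq_self (by omega) hrel S.x01_mul_x00).symm
  linearIndependent := by
    convert S.basis_indep.comp (Prod.mk 0) (Prod.mk_right_injective 0) using 1
    funext p
    simp [chi_eq_altProd]

theorem isAltPair_x01_x10 (S : Suzuki k A) :
    IsAltPair k (S.x 0 1) (S.x 1 0) S.N S.n S.μ S.lam where
  N_ne_zero := Nat.one_le_iff_ne_zero.1 S.hN
  m_ne_zero := by rcases S.hμ with hμ | hμ <;> simp [hμ]
  l_mul_self := mul_self_eq_one_iff.2 S.hlam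
  sq_eq := S.rel_sq2
  altProd_swap := chi_eq_altProd S.x 1 0 S.n ▸ chi_eq_altProd S.x 0 1 S.n ▸ S.rel_chi1
  pow_succ_eq := by
    have hN := S.hN
    have hrel : S.μ • S.x 0 1 ^ (2 * S.N) + (1 : k) • S.x 0 0 ^ (2 * S.N) = 1 := by
      rw [one_smul, add_comm, S.rel_mu]
    exact eq_smul_symm_of_mul_self_eq_one (mul_self_eq_one_iff.2 S.hμ)
      (smul_pow_succ_eq_self (by omega) hrel S.x00_mul_x01).symm
  linearIndependent := by
    convert S.basis_indep.comp (Prod.mk 1) (Prod.mk_right_injective 1) using 1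
    funext p
    simp [chi_eq_altProd]

end Suzuki

/-- t even: criteria for `y² = z²` and `u² = v²`. -/
theorem stmt8 (k A : Type*) [Field k] [CharZero k] [IsAlgClosed k]
    [Ring A] [HopfAlgebra k A] (S : Suzuki k A)
    (s t : ℕ) (hs1 : 1 ≤ s) (hs2 : s ≤ S.N) (ht1 : 1 ≤ t) (ht2 : t ≤ S.n - 1)
    (hteven : Even t)
    (P Q R T : A)
    (hP : P = S.x 0 0 ^ (2 * s) * chi S.x 0 0 t)
    (hQ : Q = S.x 0 0 ^ (2 * s) * chi S.x 1 1 t)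
    (hR : R = S.x 0 1 ^ (2 * s) * chi S.x 0 1 t)
    (hT : T = S.x 0 1 ^ (2 * s) * chi S.x 1 0 t)
    (a1 a2 a3 b1 b2 b3 d1 d2 d3 e1 e2 e3 : k) :
    ((a1 • P + (1 - a1) • Q + a2 • R + a3 • T) ^ 2
        = (b1 • P + (1 - b1) • Q + b2 • R + b3 • T) ^ 2
      ↔ (a1 - b1) * (1 - a1 - b1) = 0 ∧ a2 * a3 = b2 * b3 ∧
        (2 * t ≠ S.n → a1 = b1 ∧ a2 ^ 2 = b2 ^ 2 ∧ a3 ^ 2 = b3 ^ 2) ∧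
        (2 * t = S.n → a2 ^ 2 + S.lam * a3 ^ 2 = b2 ^ 2 + S.lam * b3 ^ 2))
    ∧ ((d1 • P - d1 • Q + d2 • R + d3 • T) ^ 2
        = (e1 • P - e1 • Q + e2 • R + e3 • T) ^ 2
      ↔ d1 ^ 2 = e1 ^ 2 ∧ d2 * d3 = e2 * e3 ∧
        (2 * t ≠ S.n → d2 ^ 2 = e2 ^ 2 ∧ d3 ^ 2 = e3 ^ 2) ∧
        (2 * t = S.n → d2 ^ 2 + S.lam * d3 ^ 2 = e2 ^ 2 + S.lam * e3 ^ 2)) := by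
  simp only [chi_eq_altProd] at hP hQ hR hT
  exact stmt8_general S.isAltPair_x00_x11 S.isAltPair_x01_x10 S.x00_mul_x01 S.x01_mul_x00
    (by omega) (by omega) (by omega) hteven hP hQ hR hT a1 a2 a3 b1 b2 b3 d1 d2 d3 e1 e2 e3
end
end
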